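/- arXiv:1107.5280 — 10 statements merged into one kernel-verified Lean document; each statement's English description precedes it below -/
import Mathlib

section
/- Let a < b be real numbers, K_a > 0, K_b > 0, and z_a, z_b ∈ ℝ satisfy z_b − K_b·(b − a) ≤ z_a and z_a − K_a·(b − a) ≤ z_b. Define x̂ = (z_a − z_b + K_a·a + K_b·b)/(K_a + K_b) and φ(x) = max(z_a − K_a·(x − a), z_b − K_b·(b − x)). Then x̂ ∈ [a,b], φ(x̂) = (K_b·z_a + K_a·z_b − K_a·K_b·(b − a))/(K_a + K_b), and φ(x) ≥ φ(x̂) for every x ∈ [a,b]. -/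
/-!
The two affine pieces of `φ` have slopes `-Ka < 0` and `Kb > 0`, and they agree at the point
`x̂ = (za - zb + Ka * a + Kb * b) / (Ka + Kb)`. Hence to the left of `x̂` the decreasing piece
is at least the common value, and to the right of `x̂` the increasing piece is, so `x̂` minimizes `φ`.
The hypotheses `h1` and `h2` say exactly that `a ≤ x̂` and `x̂ ≤ b`.
-/

theorem stmt_1 (a b Ka Kb za zb : ℝ) (hab : a < b) (hKa : 0 < Ka) (hKb : 0 < Kb)
    (h1 : zb - Kb * (b - a) ≤ za) (h2 : za - Ka * (b - a) ≤ zb) :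
    (za - zb + Ka * a + Kb * b) / (Ka + Kb) ∈ Set.Icc a b ∧
    (fun x => max (za - Ka * (x - a)) (zb - Kb * (b - x)))
        ((za - zb + Ka * a + Kb * b) / (Ka + Kb))
      = (Kb * za + Ka * zb - Ka * Kb * (b - a)) / (Ka + Kb) ∧
    ∀ x ∈ Set.Icc a b,
      (fun x => max (za - Ka * (x - a)) (zb - Kb * (b - x))) x ≥
      (fun x => max (za - Ka * (x - a)) (zb - Kb * (b - x)))
        ((za - zb + Ka * a + Kb * b) / (Ka + Kb)) := by
  have hK : 0 < Ka + Kb := add_pos hKa hKb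
  have hL : za - Ka * ((za - zb + Ka * a + Kb * b) / (Ka + Kb) - a)
      = (Kb * za + Ka * zb - Ka * Kb * (b - a)) / (Ka + Kb) := by
    field_simp
    ring
  have hR : zb - Kb * (b - (za - zb + Ka * a + Kb * b) / (Ka + Kb))
      = (Kb * za + Ka * zb - Ka * Kb * (b - a)) / (Ka + Kb) := by
    field_simp
    ring
  have hmax : max (za - Ka * ((za - zb + Ka * a + Kb * b) / (Ka + Kb) - a))
      (zb - Kb * (b - (za - zb + Ka * a + Kb * b) / (Ka + Kb)))
      = (Kb * za + Ka * zb - Ka * Kb * (b - a)) / (Ka + Kb) := by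
    rw [hL, hR, max_self]
  refine ⟨⟨?_, ?_⟩, hmax, fun x _ => ?_⟩
  · rw [le_div_iff₀ hK]
    linarith
  · rw [div_le_iff₀ hK]
    linarith
  · refine hmax.trans_le ?_
    rcases le_total x ((za - zb + Ka * a + Kb * b) / (Ka + Kb)) with hx | hx
    · refine le_max_of_le_left ?_
      rw [← hL]
      gcongr
    · refine le_max_of_le_right ?_
      rw [← hR]
      gcongr
end

section
/- Let a < b be real numbers, L > 0, and let g : ℝ → ℝ be L-Lipschitz on [a,b]. If K_a > L and K_b > L, then the point x̂ = (g(a) − g(b) + K_a·a + K_b·b)/(K_a + K_b) satisfies a < x̂ < b. -/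
theorem stmt_2 (a b L Ka Kb : ℝ) (hab : a < b) (hL : 0 < L) (g : ℝ → ℝ)
    (hlip : ∀ x ∈ Set.Icc a b, ∀ y ∈ Set.Icc a b, |g x - g y| ≤ L * |x - y|)
    (hKa : L < Ka) (hKb : L < Kb) :
    a < (g a - g b + Ka * a + Kb * b) / (Ka + Kb) ∧
    (g a - g b + Ka * a + Kb * b) / (Ka + Kb) < b := by
  have h := hlip b (Set.right_mem_Icc.2 hab.le) a (Set.left_mem_Icc.2 hab.le)
  rw [abs_of_pos (sub_pos.2 hab), abs_le] at h
  have ha : L * (b - a) < Ka * (b - a) := mul_lt_mul_of_pos_right hKa (sub_pos.2 hab)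
  have hb : L * (b - a) < Kb * (b - a) := mul_lt_mul_of_pos_right hKb (sub_pos.2 hab)
  have hK : 0 < Ka + Kb := by linarith
  -- Clearing the denominator, the two bounds read `g b - g a < Kb * (b - a)` and
  -- `g a - g b < Ka * (b - a)`.
  rw [lt_div_iff₀ hK, div_lt_iff₀ hK]
  constructor <;> linarith [h.1, h.2]
end

section
/- Let a < b be real numbers, L > 0, and let g : ℝ → ℝ be L-Lipschitz on [a,b]. If K_a ≥ L and K_b ≥ L, then for every x ∈ [a,b], g(x) ≥ (K_b·g(a) + K_a·g(b) − K_a·K_b·(b − a))/(K_a + K_b). -/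
theorem stmt_3 (a b L Ka Kb : ℝ) (hab : a < b) (hL : 0 < L) (g : ℝ → ℝ)
    (hlip : ∀ x ∈ Set.Icc a b, ∀ y ∈ Set.Icc a b, |g x - g y| ≤ L * |x - y|)
    (hKa : L ≤ Ka) (hKb : L ≤ Kb) :
    ∀ x ∈ Set.Icc a b,
      g x ≥ (Kb * g a + Ka * g b - Ka * Kb * (b - a)) / (Ka + Kb) := by
  intro x hx
  have hKa0 : 0 < Ka := hL.trans_le hKa
  have hKb0 : 0 < Kb := hL.trans_le hKb
  have ha : g a - Ka * (x - a) ≤ g x := by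
    have h := hlip x hx a (Set.left_mem_Icc.2 hab.le)
    rw [abs_of_nonneg (sub_nonneg.2 hx.1)] at h
    have hK := mul_le_mul_of_nonneg_right hKa (sub_nonneg.2 hx.1)
    linarith [(abs_le.1 h).1]
  have hb : g b - Kb * (b - x) ≤ g x := by
    have h := hlip b (Set.right_mem_Icc.2 hab.le) x hx
    rw [abs_of_nonneg (sub_nonneg.2 hx.2)] at h
    have hK := mul_le_mul_of_nonneg_right hKb (sub_nonneg.2 hx.2)
    linarith [(abs_le.1 h).2]
  rw [ge_iff_le, div_le_iff₀ (add_pos hKa0 hKb0)]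
  -- Weighting the two linear minorants by `Kb` and `Ka` makes the terms in `x` cancel.
  linarith [mul_le_mul_of_nonneg_left ha hKb0.le, mul_le_mul_of_nonneg_left hb hKa0.le]
end

section
/- Let a < b be real numbers, let g₁ : ℝ → ℝ be L₁-Lipschitz on [a,b] with L₁ > 0 and g₁(a) > 0, and let g₂ : ℝ → ℝ be L₂-Lipschitz on [a,b] with L₂ > 0. Let K₁ ≥ L₁ and K₂ ≥ L₂. Then every x ∈ [a,b] with g₁(x) ≤ 0 satisfies g₂(x) ≥ g₂(b) − K₂·(b − a − g₁(a)/K₁). -/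
theorem stmt_7 (a b L1 L2 K1 K2 : ℝ) (hab : a < b) (g1 g2 : ℝ → ℝ)
    (hL1 : 0 < L1)
    (hlip1 : ∀ x ∈ Set.Icc a b, ∀ y ∈ Set.Icc a b, |g1 x - g1 y| ≤ L1 * |x - y|)
    (hg1a : 0 < g1 a)
    (hL2 : 0 < L2)
    (hlip2 : ∀ x ∈ Set.Icc a b, ∀ y ∈ Set.Icc a b, |g2 x - g2 y| ≤ L2 * |x - y|)
    (hK1 : L1 ≤ K1) (hK2 : L2 ≤ K2) :
    ∀ x ∈ Set.Icc a b, g1 x ≤ 0 →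
      g2 x ≥ g2 b - K2 * (b - a - g1 a / K1) := by
  rintro x ⟨hax, hxb⟩ hx
  have hK1pos : 0 < K1 := hL1.trans_le hK1
  have hK2pos : 0 < K2 := hL2.trans_le hK2
  -- `g1` must drop from `g1 a` to a nonpositive value, so `x` lies at least `g1 a / K1` beyond `a`.
  have hdist : g1 a / K1 ≤ x - a := by
    rw [div_le_iff₀ hK1pos]
    have habs := hlip1 a ⟨le_rfl, hab.le⟩ x ⟨hax, hxb⟩
    rw [abs_sub_comm a x, abs_of_nonneg (sub_nonneg.2 hax)] at habs
    have hdrop := le_abs_self (g1 a - g1 x)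
    have hLK := mul_le_mul_of_nonneg_right hK1 (sub_nonneg.2 hax)
    linarith
  have habs := hlip2 b ⟨hab.le, le_rfl⟩ x ⟨hax, hxb⟩
  rw [abs_of_nonneg (sub_nonneg.2 hxb)] at habs
  have hdrop := le_abs_self (g2 b - g2 x)
  have hLK := mul_le_mul_of_nonneg_right hK2 (sub_nonneg.2 hxb)
  have hfar : K2 * (b - x) ≤ K2 * (b - a - g1 a / K1) :=
    mul_le_mul_of_nonneg_left (by linarith) hK2pos.le
  linarith
end

section
/- Let a < b be real numbers, let g₁ : ℝ → ℝ be L₁-Lipschitz on [a,b] with L₁ > 0 and g₁(b) > 0, and let g₂ : ℝ → ℝ be L₂-Lipschitz on [a,b] with L₂ > 0. Let K₁ ≥ L₁ and K₂ ≥ L₂. Then every x ∈ [a,b] with g₁(x) ≤ 0 satisfies g₂(x) ≥ g₂(a) − K₂·(b − a − g₁(b)/K₁). -/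
/-! If `g1 x ≤ 0 < g1 b`, the Lipschitz bound on `g1` forces `b - x ≥ g1 b / K1`, hence
`x - a ≤ b - a - g1 b / K1`. The Lipschitz bound on `g2` between `a` and `x` then limits the
decrease of `g2` to `K2 * (x - a)`. -/


theorem stmt_8 (a b L1 L2 K1 K2 : ℝ) (hab : a < b) (g1 g2 : ℝ → ℝ)
    (hL1 : 0 < L1)
    (hlip1 : ∀ x ∈ Set.Icc a b, ∀ y ∈ Set.Icc a b, |g1 x - g1 y| ≤ L1 * |x - y|)
    (hg1b : 0 < g1 b)
    (hL2 : 0 < L2)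
    (hlip2 : ∀ x ∈ Set.Icc a b, ∀ y ∈ Set.Icc a b, |g2 x - g2 y| ≤ L2 * |x - y|)
    (hK1 : L1 ≤ K1) (hK2 : L2 ≤ K2) :
    ∀ x ∈ Set.Icc a b, g1 x ≤ 0 →
      g2 x ≥ g2 a - K2 * (b - a - g1 b / K1) := by
  intro x hx hgx
  have hb : b ∈ Set.Icc a b := Set.right_mem_Icc.2 hab.le
  have ha : a ∈ Set.Icc a b := Set.left_mem_Icc.2 hab.le
  have h1 := (le_abs_self _).trans (hlip1 b hb x hx)
  have h2 := (le_abs_self _).trans (hlip2 a ha x hx)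
  rw [abs_of_nonneg (sub_nonneg.2 hx.2)] at h1
  rw [abs_sub_comm, abs_of_nonneg (sub_nonneg.2 hx.1)] at h2
  have h3 : L1 * (b - x) ≤ K1 * (b - x) :=
    mul_le_mul_of_nonneg_right hK1 (sub_nonneg.2 hx.2)
  have h4 : L2 * (x - a) ≤ K2 * (x - a) :=
    mul_le_mul_of_nonneg_right hK2 (sub_nonneg.2 hx.1)
  -- A feasible point stays at distance at least `g1 b / K1` from the infeasible endpoint `b`.
  have h5 : g1 b / K1 ≤ b - x := by
    rw [div_le_iff₀' (hL1.trans_le hK1)]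
    linarith
  have h6 : K2 * (x - a) ≤ K2 * (b - a - g1 b / K1) :=
    mul_le_mul_of_nonneg_left (by linarith) (hL2.trans_le hK2).le
  linarith
end

section
/- Let a < b be real numbers, L > 0, and let g : ℝ → ℝ be L-Lipschitz on [a,b]. If g(a) > 0, g(b) > 0, and L·(b − a) < g(a) + g(b), then g(x) > 0 for every x ∈ [a,b]. -/
theorem stmt_9 (a b L : ℝ) (hab : a < b) (hL : 0 < L) (g : ℝ → ℝ)
    (hlip : ∀ x ∈ Set.Icc a b, ∀ y ∈ Set.Icc a b, |g x - g y| ≤ L * |x - y|)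
    (hga : 0 < g a) (hgb : 0 < g b) (hshort : L * (b - a) < g a + g b) :
    ∀ x ∈ Set.Icc a b, 0 < g x := by
  intro x hx
  have ha := hlip a ⟨le_rfl, hab.le⟩ x hx
  have hb := hlip b ⟨hab.le, le_rfl⟩ x hx
  rw [abs_sub_comm a x, abs_of_nonneg (sub_nonneg.mpr hx.1)] at ha
  rw [abs_of_nonneg (sub_nonneg.mpr hx.2)] at hb
  -- Adding the two one-sided bounds gives `g a + g b - 2 * g x ≤ L * (b - a) < g a + g b`.
  linarith [le_of_abs_le ha, le_of_abs_le hb]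
end

section
/- Let a < b be real numbers, let g₁ : ℝ → ℝ be L₁-Lipschitz on [a,b] with L₁ > 0 and g₁(a) > 0, and let g₂ : ℝ → ℝ be L₂-Lipschitz on [a,b] with L₂ > 0 and g₂(b) > 0. If b − a < g₁(a)/L₁ + g₂(b)/L₂, then there is no x ∈ [a,b] such that g₁(x) ≤ 0 and g₂(x) ≤ 0. -/
theorem stmt_10 (a b L1 L2 : ℝ) (hab : a < b) (g1 g2 : ℝ → ℝ)
    (hL1 : 0 < L1)
    (hlip1 : ∀ x ∈ Set.Icc a b, ∀ y ∈ Set.Icc a b, |g1 x - g1 y| ≤ L1 * |x - y|)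
    (hg1a : 0 < g1 a)
    (hL2 : 0 < L2)
    (hlip2 : ∀ x ∈ Set.Icc a b, ∀ y ∈ Set.Icc a b, |g2 x - g2 y| ≤ L2 * |x - y|)
    (hg2b : 0 < g2 b)
    (hshort : b - a < g1 a / L1 + g2 b / L2) :
    ¬ ∃ x ∈ Set.Icc a b, g1 x ≤ 0 ∧ g2 x ≤ 0 := by
  rintro ⟨x, hx, h1, h2⟩
  have e1 := (le_abs_self _).trans (hlip1 a (Set.left_mem_Icc.2 hab.le) x hx)
  have e2 := (le_abs_self _).trans (hlip2 b (Set.right_mem_Icc.2 hab.le) x hx)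
  rw [abs_of_nonpos (by linarith [hx.1])] at e1
  rw [abs_of_nonneg (by linarith [hx.2])] at e2
  -- A point feasible for both constraints lies at distance at least `g1 a / L1` from `a`
  -- and at least `g2 b / L2` from `b`, so these two lengths add up to at most `b - a`.
  have d1 : g1 a / L1 ≤ x - a := by
    rw [div_le_iff₀ hL1]
    linarith
  have d2 : g2 b / L2 ≤ b - x := by
    rw [div_le_iff₀ hL2]
    linarith
  linarith
end

section
/- Let a < x* < b be real numbers, z_a ≥ 0, z_b ≥ 0, η_a > 0, η_b > 0, and r > 0. If r·η_a > z_a/(x* − a) and r·η_b > z_b/(b − x*), then (η_b·z_a + η_a·z_b + r·η_a·η_b·(a − b))/(η_a + η_b) < 0. -/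
theorem stmt_13 (a b xstar za zb ηa ηb r : ℝ)
    (h1 : a < xstar) (h2 : xstar < b)
    (hza : 0 ≤ za) (hzb : 0 ≤ zb) (hηa : 0 < ηa) (hηb : 0 < ηb) (hr : 0 < r)
    (ca : r * ηa > za / (xstar - a)) (cb : r * ηb > zb / (b - xstar)) :
    (ηb * za + ηa * zb + r * ηa * ηb * (a - b)) / (ηa + ηb) < 0 := by
  have ha : za < r * ηa * (xstar - a) := (div_lt_iff₀ (sub_pos.mpr h1)).mp ca
  have hb : zb < r * ηb * (b - xstar) := (div_lt_iff₀ (sub_pos.mpr h2)).mp cb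
  refine div_neg_of_neg_of_pos ?_ (add_pos hηa hηb)
  -- Weighting the two bounds by `ηb` and `ηa` makes `xstar` cancel in their sum.
  linarith [mul_lt_mul_of_pos_left ha hηb, mul_lt_mul_of_pos_left hb hηa]
end

section
/- Let a < x* < b be real numbers, z_a > 0, z_b ≥ 0, η_a > 0, η_b > 0, and r > 0. If r·η_a > z_a/(x* − a) and r·η_b > z_b/(b − x*), then z_b − r·η_b·(b − a − z_a/(r·η_a)) < 0. -/
theorem stmt_14 (a b xstar za zb ηa ηb r : ℝ)
    (h1 : a < xstar) (h2 : xstar < b)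
    (hza : 0 < za) (hzb : 0 ≤ zb) (hηa : 0 < ηa) (hηb : 0 < ηb) (hr : 0 < r)
    (ca : r * ηa > za / (xstar - a)) (cb : r * ηb > zb / (b - xstar)) :
    zb - r * ηb * (b - a - za / (r * ηa)) < 0 := by
  -- The `a`-condition puts `a + za / (r * ηa)` to the left of `xstar`.
  have hA : za / (r * ηa) < xstar - a :=
    (div_lt_comm₀ (sub_pos.2 h1) (mul_pos hr hηa)).1 ca
  have hB : zb < r * ηb * (b - xstar) := (div_lt_iff₀ (sub_pos.2 h2)).1 cb
  have hC : r * ηb * (b - xstar) < r * ηb * (b - a - za / (r * ηa)) :=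
    mul_lt_mul_of_pos_left (by linarith) (mul_pos hr hηb)
  linarith
end

section
/- Let a < x* < b be real numbers, z_a ≥ 0, z_b > 0, η_a > 0, η_b > 0, and r > 0. If r·η_a > z_a/(x* − a) and r·η_b > z_b/(b − x*), then z_a − r·η_a·(b − a − z_b/(r·η_b)) < 0. -/
theorem stmt_15 (a b xstar za zb ηa ηb r : ℝ)
    (h1 : a < xstar) (h2 : xstar < b)
    (hza : 0 ≤ za) (hzb : 0 < zb) (hηa : 0 < ηa) (hηb : 0 < ηb) (hr : 0 < r)
    (ca : r * ηa > za / (xstar - a)) (cb : r * ηb > zb / (b - xstar)) :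
    za - r * ηa * (b - a - zb / (r * ηb)) < 0 := by
  have hA : za < r * ηa * (xstar - a) := (div_lt_iff₀ (sub_pos.2 h1)).1 ca
  have hB : zb / (r * ηb) < b - xstar :=
    (div_lt_comm₀ (sub_pos.2 h2) (mul_pos hr hηb)).1 cb
  -- By `hB`, the second factor of the subtracted product exceeds `xstar - a`.
  have hC : r * ηa * (xstar - a) < r * ηa * (b - a - zb / (r * ηb)) :=
    mul_lt_mul_of_pos_left (by linarith) (mul_pos hr hηa)
  linarith
end
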